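/- Let 0 < n < d be integers, β > 0, A, C₀, c₁ > 0, and let μ be an n-ADR measure on ℝ^d with support E. There is a constant C, depending only on n, d, β, A, C₀, c₁ and the ADR constant of μ, with the following property. Let S satisfy |S(x,y)| ≤ A|x−y|^{−(n+β)} and |S(x,y)−S(x,y′)| ≤ A|y−y′| |x−y|^{−(n+β+1)} for |y−y′| ≤ |x−y|/2. Let x ∈ ℝ^d∖E with ℓ = dist(x,E), and suppose we are given, for each integer k ≥ 0, an n-plane L_k intersecting B(x, 2^k ℓ), c_k ∈ [0, C₀] and α_k ∈ [0,1] satisfying conditions (i)–(iii) of the multiscale hypotheses, and additionally c₁ ℓ ≤ dist(x, L_0) ≤ c₁^{−1} ℓ. Then |T_{S,μ}1(x)| ≤ C ( ℓ^{−β} Σ_{k≥0} 2^{−kβ} α_k + sup { |T_{S,L}1(x)| : L an n-plane with c₁ ℓ ≤ dist(x,L) ≤ c₁^{−1} ℓ } ). -/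

import Mathlib

open MeasureTheory Metric Set
open scoped ENNReal NNReal

noncomputable section

abbrev Euc (d : ℕ) := EuclideanSpace ℝ (Fin d)

/-- The closed support of a Borel measure on `ℝ^d`. -/
def msupport {d : ℕ} (μ : Measure (Euc d)) : Set (Euc d) :=
  {x | ∀ r > 0, 0 < μ (Metric.ball x r)}

/-- `L` is an `n`-dimensional affine subspace (an `n`-plane) of `ℝ^d`. -/
def IsNPlane {d : ℕ} (n : ℕ) (L : Set (Euc d)) : Prop :=
  ∃ W : AffineSubspace ℝ (Euc d), (W : Set (Euc d)) = L ∧ Module.finrank ℝ W.direction = n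

/-- `μ` is `n`-Ahlfors–David regular with constant `A` and (unbounded) support `E`. -/
def IsADRWith {d : ℕ} (n : ℕ) (A : ℝ) (μ : Measure (Euc d)) (E : Set (Euc d)) : Prop :=
  1 ≤ A ∧ msupport μ = E ∧ ¬ Bornology.IsBounded E ∧
    ∀ x ∈ E, ∀ r : ℝ, 0 < r →
      ENNReal.ofReal (A⁻¹ * r ^ n) ≤ μ (closedBall x r) ∧
      μ (closedBall x r) ≤ ENNReal.ofReal (A * r ^ n)

/-- `μ` is `n`-uniformly rectifiable: `n`-ADR plus big pieces of Lipschitz images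
(with BPLI constants `θ`, `M`). -/
def IsURWith {d : ℕ} (n : ℕ) (A θ M : ℝ) (μ : Measure (Euc d)) (E : Set (Euc d)) : Prop :=
  IsADRWith n A μ E ∧ 0 < θ ∧ 0 < M ∧
    ∀ x ∈ E, ∀ r : ℝ, 0 < r →
      ∃ g : EuclideanSpace ℝ (Fin n) → Euc d, LipschitzWith (Real.toNNReal M) g ∧
        ENNReal.ofReal (θ * r ^ n) ≤ μ (closedBall x r ∩ g '' (closedBall 0 r))

/-- `S` belongs to the kernel class `K_{n+β}(ℝ^d)` with constant `A`:
size bound `|S(x,y)| ≤ A|x-y|^{-(n+β)}` and Lipschitz-in-`y` bound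
`|S(x,y) - S(x,y')| ≤ A|y-y'| |x-y|^{-(n+β+1)}` for `|y-y'| ≤ |x-y|/2`. -/
def IsCZKernel {d : ℕ} (n : ℕ) (β A : ℝ) (S : Euc d → Euc d → ℝ) : Prop :=
  (∀ x y : Euc d, x ≠ y → |S x y| ≤ A / dist x y ^ ((n : ℝ) + β)) ∧
  (∀ x y y' : Euc d, x ≠ y → dist y y' ≤ dist x y / 2 →
    |S x y - S x y'| ≤ A * dist y y' / dist x y ^ ((n : ℝ) + β + 1))

/-!
Cut `K = S(x, ·)` off smoothly at the scales `r_k = 2ᵏ(c₁/2)ℓ` and let `e_k` be the difference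
between the truncated potentials at `x` of `μ` and of `c_k ℋⁿ` on `L_k`. The difference of two
consecutive truncations is a Lipschitz function supported in an annulus of radius about `r_k`, so
(i) bounds its integral against `μ - c_k ℋⁿ|_{L_k}`, while (ii) and (iii) bound the cost of
replacing `c_k` and `L_k` by `c_{k+1}` and `L_{k+1}` in the remaining tail; for (iii) one plane is
projected orthogonally to the other, which moves points by `O(α_{k+1})` relative to their distance
to `x` and distorts `ℋⁿ` by a factor `1 + O(α_{k+1})`. Hence
`|e_k - e_{k+1}| ≲ r_k^{-β} (α_k + α_{k+1})`. As `e_k → 0`, telescoping bounds `e_0`. The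
truncation at scale `r_0` is invisible to `μ` and to `L_0`, whose distances to `x` are at least
`2 r_0`, so that `T_{S,μ}1(x) = e_0 + c_0 T_{S,L_0}1(x)`.
-/

section Kernel

variable {X : Type*} [PseudoMetricSpace X]

/-- The size and smoothness bounds of order `s` with constant `A` for the slice `K = S(x, ·)` of a
kernel `S` at the pole `x`. -/
structure IsCZKernelAt (s A : ℝ) (x : X) (K : X → ℝ) : Prop where
  const_nonneg : 0 ≤ A
  abs_le : ∀ y, 0 < dist x y → |K y| ≤ A / dist x y ^ s
  abs_sub_le : ∀ y y', 0 < dist x y → dist y y' ≤ dist x y / 2 →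
    |K y - K y'| ≤ A * dist y y' / dist x y ^ (s + 1)

/-- The Lipschitz cutoff equal to `0` on `B(x, r)` and to `1` off `B(x, 2r)`, used to remove the
singularity of a kernel at its pole. -/
def outerCutoff (x : X) (r : ℝ) (y : X) : ℝ := max 0 (min 1 (dist x y / r - 1))

/-- The kernel slice `K` cut off smoothly from `B(x, r)`. -/
def truncatedKernel (x : X) (r : ℝ) (K : X → ℝ) (y : X) : ℝ := outerCutoff x r y * K y

/-- The function `|x - y|^{-s}` off the open ball `B(x, r)`, extended by `0`; it dominates kernels
of order `s` that vanish near their pole. -/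
def tailWeight (s : ℝ) (x : X) (r : ℝ) : X → ℝ := (ball x r)ᶜ.indicator fun y => (dist x y ^ s)⁻¹

variable {s A r : ℝ} {x y y' : X} {K F : X → ℝ}

lemma outerCutoff_nonneg : 0 ≤ outerCutoff x r y := le_max_left _ _

lemma outerCutoff_le_one : outerCutoff x r y ≤ 1 := max_le zero_le_one (min_le_left _ _)

lemma outerCutoff_eq_zero (hr : 0 < r) (h : dist x y ≤ r) : outerCutoff x r y = 0 :=
  max_eq_left <| (min_le_right _ _).trans <| sub_nonpos.2 <| (div_le_one hr).2 h

lemma outerCutoff_eq_one (hr : 0 < r) (h : 2 * r ≤ dist x y) : outerCutoff x r y = 1 := by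
  have : 1 ≤ dist x y / r - 1 := by rw [le_sub_iff_add_le, le_div_iff₀ hr]; linarith
  rw [outerCutoff, min_eq_left this, max_eq_right zero_le_one]

lemma abs_outerCutoff_sub_le (hr : 0 < r) :
    |outerCutoff x r y - outerCutoff x r y'| ≤ dist y y' / r := by
  have hclamp : |outerCutoff x r y - outerCutoff x r y'| ≤ |(dist x y - dist x y') / r| := by
    refine (abs_max_sub_max_le_max _ _ _ _).trans (max_le (by simp) ?_)
    refine (abs_min_sub_min_le_max _ _ _ _).trans (max_le (by simp) ?_)
    rw [sub_sub_sub_cancel_right, sub_div]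
  refine hclamp.trans ?_
  rw [abs_div, abs_of_pos hr, dist_comm x y, dist_comm x y']
  gcongr
  exact abs_dist_sub_le _ _ _

lemma abs_outerCutoff_sub_le_of_near (hr : 0 < r) (hxy : 0 < dist x y)
    (hyy' : dist y y' ≤ dist x y / 2) :
    |outerCutoff x r y - outerCutoff x r y'| ≤ 4 * dist y y' / dist x y := by
  rcases le_total (4 * r) (dist x y) with hfar | hclose
  · have hfar' : 2 * r ≤ dist x y' := by
      have := dist_triangle_right x y y'
      linarith
    rw [outerCutoff_eq_one hr (by linarith), outerCutoff_eq_one hr hfar', sub_self, abs_zero]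
    positivity
  · refine (abs_outerCutoff_sub_le hr).trans ?_
    rw [div_le_div_iff₀ hr hxy]
    linarith [mul_le_mul_of_nonneg_left hclose (dist_nonneg (x := y) (y := y'))]

lemma truncatedKernel_eq_zero (hr : 0 < r) (h : dist x y ≤ r) : truncatedKernel x r K y = 0 := by
  rw [truncatedKernel, outerCutoff_eq_zero hr h, zero_mul]

lemma truncatedKernel_eq_self (hr : 0 < r) (h : 2 * r ≤ dist x y) :
    truncatedKernel x r K y = K y := by
  rw [truncatedKernel, outerCutoff_eq_one hr h, one_mul]

lemma tailWeight_nonneg : 0 ≤ tailWeight s x r y :=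
  indicator_nonneg (fun _ _ => by positivity) y

lemma tailWeight_of_le (h : r ≤ dist x y) : tailWeight s x r y = (dist x y ^ s)⁻¹ :=
  indicator_of_mem (by rwa [mem_compl_iff, mem_ball', not_lt]) _

lemma tailWeight_le (hr : 0 < r) (hs : 0 ≤ s) : tailWeight s x r y ≤ (r ^ s)⁻¹ := by
  rcases lt_or_ge (dist x y) r with hy | hy
  · rw [tailWeight, indicator_of_notMem (by rwa [mem_compl_iff, not_not, mem_ball'])]
    positivity
  · rw [tailWeight_of_le hy]
    gcongr

lemma compl_ball_subset_iUnion_shell (hr : 0 < r) :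
    (ball x r)ᶜ ⊆ ⋃ i : ℕ, closedBall x (2 * (2 ^ i * r)) \ ball x (2 ^ i * r) := by
  intro y hy
  rw [mem_compl_iff, mem_ball, not_lt] at hy
  obtain ⟨i, hlow, hup⟩ := exists_nat_pow_near ((one_le_div hr).2 hy) one_lt_two
  rw [le_div_iff₀ hr] at hlow
  rw [div_lt_iff₀ hr, pow_succ'] at hup
  refine mem_iUnion.2 ⟨i, ?_, ?_⟩
  · rw [mem_closedBall]; linarith
  · rwa [mem_ball, not_lt]

namespace IsCZKernelAt

lemma truncatedKernel (hK : IsCZKernelAt s A x K) (hr : 0 < r) :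
    IsCZKernelAt s (5 * A) x (truncatedKernel x r K) where
  const_nonneg := mul_nonneg (by norm_num) hK.const_nonneg
  abs_le y hxy := by
    have hA := hK.const_nonneg
    rw [_root_.truncatedKernel, abs_mul, abs_of_nonneg outerCutoff_nonneg]
    calc outerCutoff x r y * |K y| ≤ 1 * (A / dist x y ^ s) := by
          gcongr
          exacts [outerCutoff_le_one, hK.abs_le y hxy]
      _ ≤ 5 * A / dist x y ^ s := by rw [one_mul]; gcongr; linarith
  abs_sub_le y y' hxy hyy' := by
    have hsplit : _root_.truncatedKernel x r K y - _root_.truncatedKernel x r K y' =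
        outerCutoff x r y' * (K y - K y') + (outerCutoff x r y - outerCutoff x r y') * K y := by
      simp only [_root_.truncatedKernel]; ring
    calc |_root_.truncatedKernel x r K y - _root_.truncatedKernel x r K y'|
        ≤ outerCutoff x r y' * |K y - K y'|
          + |outerCutoff x r y - outerCutoff x r y'| * |K y| := by
          rw [hsplit, ← abs_of_nonneg (outerCutoff_nonneg (y := y')), ← abs_mul, ← abs_mul,
            abs_of_nonneg outerCutoff_nonneg]
          exact abs_add_le _ _
      _ ≤ 1 * (A * dist y y' / dist x y ^ (s + 1))
          + 4 * dist y y' / dist x y * (A / dist x y ^ s) := by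
          gcongr
          exacts [outerCutoff_le_one, hK.abs_sub_le y y' hxy hyy',
            abs_outerCutoff_sub_le_of_near hr hxy hyy', hK.abs_le y hxy]
      _ = 5 * A * dist y y' / dist x y ^ (s + 1) := by
          rw [Real.rpow_add_one hxy.ne']; field_simp; ring

lemma abs_le_tailWeight (hF : IsCZKernelAt s A x F) (hr : 0 < r)
    (hF₀ : ∀ y, dist x y ≤ r → F y = 0) (y : X) : |F y| ≤ A * tailWeight s x r y := by
  rcases le_total (dist x y) r with hy | hy
  · rw [hF₀ y hy, abs_zero]
    exact mul_nonneg hF.const_nonneg tailWeight_nonneg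
  · rw [tailWeight_of_le hy, ← div_eq_mul_inv]
    exact hF.abs_le y (hr.trans_le hy)

lemma abs_sub_le_mul_dist_of_le (hF : IsCZKernelAt s A x F) (hr : 0 < r) (hs : 0 ≤ s)
    (hF₀ : ∀ y, dist x y ≤ r → F y = 0) (hy : r ≤ dist x y) :
    |F y - F y'| ≤ 4 * A / r ^ (s + 1) * dist y y' := by
  have hA := hF.const_nonneg
  rcases le_or_gt (dist y y') (dist x y / 2) with hnear | hfar
  · calc |F y - F y'| ≤ A * dist y y' / dist x y ^ (s + 1) :=
          hF.abs_sub_le y y' (hr.trans_le hy) hnear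
      _ ≤ 4 * A * dist y y' / r ^ (s + 1) := by gcongr; linarith
      _ = 4 * A / r ^ (s + 1) * dist y y' := by ring
  · have hsize : ∀ z, |F z| ≤ A * (r ^ s)⁻¹ := fun z =>
      (hF.abs_le_tailWeight hr hF₀ z).trans (mul_le_mul_of_nonneg_left (tailWeight_le hr hs) hA)
    calc |F y - F y'| ≤ |F y| + |F y'| := abs_sub _ _
      _ ≤ A * (r ^ s)⁻¹ + A * (r ^ s)⁻¹ := add_le_add (hsize y) (hsize y')
      _ = 2 * A / r ^ (s + 1) * r := by rw [Real.rpow_add_one hr.ne']; field_simp; ring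
      _ ≤ 2 * A / r ^ (s + 1) * (2 * dist y y') := by gcongr; linarith
      _ = 4 * A / r ^ (s + 1) * dist y y' := by ring

lemma abs_sub_le_mul_dist (hF : IsCZKernelAt s A x F) (hr : 0 < r) (hs : 0 ≤ s)
    (hF₀ : ∀ y, dist x y ≤ r → F y = 0) (y y' : X) :
    |F y - F y'| ≤ 4 * A / r ^ (s + 1) * dist y y' := by
  rcases le_total r (dist x y) with hy | hy
  · exact hF.abs_sub_le_mul_dist_of_le hr hs hF₀ hy
  rcases le_total r (dist x y') with hy' | hy'
  · rw [abs_sub_comm, dist_comm]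
    exact hF.abs_sub_le_mul_dist_of_le hr hs hF₀ hy'
  · have hA := hF.const_nonneg
    rw [hF₀ y hy, hF₀ y' hy', sub_self, abs_zero]
    positivity

lemma continuous (hF : IsCZKernelAt s A x F) (hr : 0 < r) (hs : 0 ≤ s)
    (hF₀ : ∀ y, dist x y ≤ r → F y = 0) : Continuous F :=
  (LipschitzWith.of_dist_le' (hF.abs_sub_le_mul_dist hr hs hF₀)).continuous

/-- Consecutive dyadic truncations differ by a function supported in an annulus: this turns the
slowly decaying kernel into admissible test functions. -/
lemma abs_truncatedKernel_sub_truncatedKernel_sub_le (hK : IsCZKernelAt s A x K) (hr : 0 < r)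
    (hs : 0 ≤ s) (y y' : X) :
    |(_root_.truncatedKernel x r K y - _root_.truncatedKernel x (2 * r) K y)
        - (_root_.truncatedKernel x r K y' - _root_.truncatedKernel x (2 * r) K y')| ≤
      40 * A / r ^ (s + 1) * dist y y' := by
  have hinner := (hK.truncatedKernel hr).abs_sub_le_mul_dist hr hs
    (fun _ => truncatedKernel_eq_zero hr) y y'
  have houter := (hK.truncatedKernel (mul_pos two_pos hr)).abs_sub_le_mul_dist hr hs
    (fun _ hz => truncatedKernel_eq_zero (mul_pos two_pos hr) (by linarith)) y y'
  rw [sub_sub_sub_comm]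
  refine (abs_sub _ _).trans ((add_le_add hinner houter).trans_eq ?_)
  ring

end IsCZKernelAt

lemma tsupport_truncatedKernel_sub_subset (hr : 0 < r) :
    tsupport (fun y => truncatedKernel x r K y - truncatedKernel x (2 * r) K y) ⊆
      closedBall x (4 * r) := by
  refine closure_minimal (fun y hy => ?_) isClosed_closedBall
  contrapose! hy
  rw [mem_closedBall', not_le] at hy
  rw [Function.notMem_support, truncatedKernel_eq_self hr (by linarith),
    truncatedKernel_eq_self (mul_pos two_pos hr) (by linarith), sub_self]

end Kernel

section Growth

variable {X : Type*} [PseudoMetricSpace X] [MeasurableSpace X]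

/-- Upper `n`-regularity of `ν` at the single centre `x`, with constant `D`. -/
def HasUpperGrowthAt (n : ℕ) (D : ℝ≥0) (x : X) (ν : Measure X) : Prop :=
  ∀ r : ℝ, 0 < r → ν (closedBall x r) ≤ ENNReal.ofReal (D * r ^ n)

/-- The constant `2ⁿ Σ_i 2^{-iβ}` produced by summing `|x - y|^{-(n+β)}` over dyadic shells. -/
def tailConst (n : ℕ) (β : ℝ) : ℝ := 2 ^ n * (1 - (2 : ℝ) ^ (-β))⁻¹

variable {n : ℕ} {D : ℝ≥0} {x : X} {ν : Measure X} {β r B : ℝ}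

lemma two_rpow_neg_lt_one (hβ : 0 < β) : (2 : ℝ) ^ (-β) < 1 :=
  Real.rpow_lt_one_of_one_lt_of_neg one_lt_two (neg_neg_of_pos hβ)

lemma tailConst_pos (n : ℕ) (hβ : 0 < β) : 0 < tailConst n β :=
  mul_pos (by positivity) (inv_pos.2 (sub_pos.2 (two_rpow_neg_lt_one hβ)))

lemma two_pow_mul_rpow_neg (k : ℕ) (hr : 0 ≤ r) :
    ((2 : ℝ) ^ k * r) ^ (-β) = ((2 : ℝ) ^ (-β)) ^ k * r ^ (-β) := by
  rw [Real.mul_rpow (by positivity) hr, Real.rpow_pow_comm zero_le_two]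

lemma HasUpperGrowthAt.lintegral_shell_le (hν : HasUpperGrowthAt n D x ν) (hβ : 0 ≤ β)
    (hr : 0 < r) :
    ∫⁻ y in closedBall x (2 * r) \ ball x r, ENNReal.ofReal (dist x y ^ ((n : ℝ) + β))⁻¹ ∂ν ≤
      ENNReal.ofReal (2 ^ n * D * r ^ (-β)) := by
  have hweight : ∀ y ∈ closedBall x (2 * r) \ ball x r,
      ENNReal.ofReal (dist x y ^ ((n : ℝ) + β))⁻¹ ≤ ENNReal.ofReal (r ^ ((n : ℝ) + β))⁻¹ := by
    rintro y ⟨-, hy⟩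
    rw [mem_ball', not_lt] at hy
    gcongr
  calc ∫⁻ y in closedBall x (2 * r) \ ball x r, ENNReal.ofReal (dist x y ^ ((n : ℝ) + β))⁻¹ ∂ν
      ≤ ENNReal.ofReal (r ^ ((n : ℝ) + β))⁻¹ * ν (closedBall x (2 * r)) := by
        refine (setLIntegral_mono measurable_const hweight).trans ?_
        rw [setLIntegral_const]
        gcongr
        exact sdiff_subset
    _ ≤ ENNReal.ofReal (r ^ ((n : ℝ) + β))⁻¹ * ENNReal.ofReal (D * (2 * r) ^ n) := by
        gcongr
        exact hν _ (by positivity)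
    _ = ENNReal.ofReal (2 ^ n * D * r ^ (-β)) := by
        rw [← ENNReal.ofReal_mul (by positivity), Real.rpow_add hr, Real.rpow_natCast,
          Real.rpow_neg hr.le]
        congr 1
        field_simp
        rw [mul_pow]
        ring

variable [OpensMeasurableSpace X]

lemma measurable_tailWeight (s : ℝ) : Measurable (tailWeight s x r) :=
  (by fun_prop : Measurable fun y => (dist x y ^ s)⁻¹).indicator measurableSet_ball.compl

namespace HasUpperGrowthAt

lemma lintegral_tailWeight_le (hν : HasUpperGrowthAt n D x ν) (hβ : 0 < β) (hr : 0 < r) :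
    ∫⁻ y, ENNReal.ofReal (tailWeight (n + β) x r y) ∂ν ≤
      ENNReal.ofReal (tailConst n β * D * r ^ (-β)) := by
  have hq := two_rpow_neg_lt_one hβ
  let w : X → ℝ≥0∞ := fun y => ENNReal.ofReal (dist x y ^ ((n : ℝ) + β))⁻¹
  calc ∫⁻ y, ENNReal.ofReal (tailWeight (n + β) x r y) ∂ν = ∫⁻ y in (ball x r)ᶜ, w y ∂ν := by
        rw [← lintegral_indicator measurableSet_ball.compl]
        congr with y
        by_cases hy : y ∈ (ball x r)ᶜ <;> simp [tailWeight, hy, w]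
    _ ≤ ∑' i : ℕ, ∫⁻ y in closedBall x (2 * (2 ^ i * r)) \ ball x (2 ^ i * r), w y ∂ν :=
        (lintegral_mono_set (compl_ball_subset_iUnion_shell hr)).trans (lintegral_iUnion_le _ _)
    _ ≤ ∑' i : ℕ, ENNReal.ofReal (2 ^ n * D * r ^ (-β) * ((2 : ℝ) ^ (-β)) ^ i) := by
        gcongr with i
        refine (hν.lintegral_shell_le hβ.le (by positivity)).trans_eq ?_
        rw [two_pow_mul_rpow_neg i hr.le]
        ring_nf
    _ = ENNReal.ofReal (tailConst n β * D * r ^ (-β)) := by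
        rw [← ENNReal.ofReal_tsum_of_nonneg (fun i => by positivity)
          ((summable_geometric_of_lt_one (by positivity) hq).mul_left _), tsum_mul_left,
          tsum_geometric_of_lt_one (by positivity) hq, tailConst]
        ring_nf

lemma integrable_tailWeight (hν : HasUpperGrowthAt n D x ν) (hβ : 0 < β) (hr : 0 < r) :
    Integrable (tailWeight (n + β) x r) ν := by
  refine ⟨(measurable_tailWeight _).aestronglyMeasurable, ?_⟩
  rw [hasFiniteIntegral_iff_ofReal (.of_forall fun _ => tailWeight_nonneg)]
  exact (hν.lintegral_tailWeight_le hβ hr).trans_lt ENNReal.ofReal_lt_top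

lemma integral_tailWeight_le (hν : HasUpperGrowthAt n D x ν) (hβ : 0 < β) (hr : 0 < r) :
    ∫ y, tailWeight (n + β) x r y ∂ν ≤ tailConst n β * D * r ^ (-β) := by
  have := tailConst_pos n hβ
  rw [integral_eq_lintegral_of_nonneg_ae (.of_forall fun _ => tailWeight_nonneg)
    (measurable_tailWeight _).aestronglyMeasurable]
  exact ENNReal.toReal_le_of_le_ofReal (by positivity) (hν.lintegral_tailWeight_le hβ hr)

lemma integral_abs_le (hν : HasUpperGrowthAt n D x ν) (hβ : 0 < β) (hr : 0 < r) (hB : 0 ≤ B)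
    {G : X → ℝ} (hG : ∀ᵐ y ∂ν, |G y| ≤ B * tailWeight (n + β) x r y) :
    ∫ y, |G y| ∂ν ≤ B * (tailConst n β * D * r ^ (-β)) := by
  calc ∫ y, |G y| ∂ν ≤ ∫ y, B * tailWeight (n + β) x r y ∂ν :=
        integral_mono_of_nonneg (.of_forall fun _ => abs_nonneg _)
          ((hν.integrable_tailWeight hβ hr).const_mul B) hG
    _ ≤ B * (tailConst n β * D * r ^ (-β)) := by
        rw [integral_const_mul]
        gcongr
        exact hν.integral_tailWeight_le hβ hr

end HasUpperGrowthAt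

namespace IsCZKernelAt

variable {A : ℝ} {F : X → ℝ}

lemma integrable (hF : IsCZKernelAt (n + β) A x F) (hν : HasUpperGrowthAt n D x ν) (hβ : 0 < β)
    (hr : 0 < r) (hF₀ : ∀ y, dist x y ≤ r → F y = 0) : Integrable F ν :=
  ((hν.integrable_tailWeight hβ hr).const_mul A).mono'
    (hF.continuous hr (by positivity) hF₀).aestronglyMeasurable
    (.of_forall fun y => hF.abs_le_tailWeight hr hF₀ y)

lemma integral_abs_le (hF : IsCZKernelAt (n + β) A x F) (hν : HasUpperGrowthAt n D x ν)
    (hβ : 0 < β) (hr : 0 < r) (hF₀ : ∀ y, dist x y ≤ r → F y = 0) :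
    ∫ y, |F y| ∂ν ≤ A * (tailConst n β * D * r ^ (-β)) :=
  hν.integral_abs_le hβ hr hF.const_nonneg (.of_forall fun y => hF.abs_le_tailWeight hr hF₀ y)

lemma abs_integral_le (hF : IsCZKernelAt (n + β) A x F) (hν : HasUpperGrowthAt n D x ν)
    (hβ : 0 < β) (hr : 0 < r) (hF₀ : ∀ y, dist x y ≤ r → F y = 0) :
    |∫ y, F y ∂ν| ≤ A * (tailConst n β * D * r ^ (-β)) :=
  abs_integral_le_integral_abs.trans (hF.integral_abs_le hν hβ hr hF₀)

end IsCZKernelAt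

end Growth

section HausdorffMeasure

variable {X Y : Type*} [EMetricSpace X] [MeasurableSpace X] [BorelSpace X]
  [EMetricSpace Y] [MeasurableSpace Y] [BorelSpace Y]
  {f : X → Y} {K : ℝ≥0} {d : ℝ} {s : Set X} {t : Set Y}

lemma restrict_hausdorffMeasure_le_map_of_surjOn (hf : LipschitzWith 1 f) (hd : 0 ≤ d)
    (hst : SurjOn f s t) :
    (μH[d] : Measure Y).restrict t ≤ ((μH[d] : Measure X).restrict s).map f := by
  refine Measure.le_iff.2 fun B hB => ?_
  have hfm := hf.continuous.measurable
  rw [Measure.map_apply hfm hB, Measure.restrict_apply hB, Measure.restrict_apply (hfm hB)]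
  have hcover : B ∩ t ⊆ f '' (f ⁻¹' B ∩ s) := by
    rintro _ ⟨hyB, hyt⟩
    obtain ⟨z, hzs, rfl⟩ := hst hyt
    exact ⟨z, ⟨hyB, hzs⟩, rfl⟩
  refine (measure_mono hcover).trans ((hf.hausdorffMeasure_image_le hd _).trans_eq ?_)
  rw [ENNReal.coe_one, ENNReal.one_rpow, one_mul]

lemma map_restrict_hausdorffMeasure_le_of_antilipschitz (hf : Measurable f) (hd : 0 ≤ d)
    (hK : AntilipschitzWith K (s.domRestrict f)) (hst : MapsTo f s t) :
    ((μH[d] : Measure X).restrict s).map f ≤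
      (K : ℝ≥0∞) ^ d • (μH[d] : Measure Y).restrict t := by
  refine Measure.le_iff.2 fun B hB => ?_
  rw [Measure.map_apply hf hB, Measure.restrict_apply (hf hB), Measure.smul_apply, smul_eq_mul,
    Measure.restrict_apply hB]
  have himage : f ⁻¹' B ∩ s = Subtype.val '' (s.domRestrict f ⁻¹' (B ∩ t)) := by
    ext y
    simp only [mem_inter_iff, mem_preimage, mem_image, Subtype.exists,
      exists_and_right, exists_eq_right]
    exact ⟨fun ⟨hyB, hys⟩ => ⟨hys, hyB, hst hys⟩, fun ⟨hys, hyB, _⟩ => ⟨hyB, hys⟩⟩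
  rw [himage, isometry_subtype_coe.hausdorffMeasure_image (.inl hd)]
  exact hK.hausdorffMeasure_preimage_le hd _

end HausdorffMeasure

lemma abs_integral_sub_le_of_le_smul {X : Type*} [MeasurableSpace X] {ν ν' : Measure X} {K : ℝ}
    {F : X → ℝ} (hK : 0 ≤ K) (hν' : ν' ≤ ν) (hν : ν ≤ ENNReal.ofReal K • ν')
    (hF : Integrable F ν') :
    |∫ y, F y ∂ν - ∫ y, F y ∂ν'| ≤ (K - 1) * ∫ y, |F y| ∂ν' := by
  have hFsmul : Integrable F (ENNReal.ofReal K • ν') := hF.smul_measure ENNReal.ofReal_ne_top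
  have hFν : Integrable F ν := hFsmul.mono_measure hν
  have habs : ∫ y, |F y| ∂ν ≤ K * ∫ y, |F y| ∂ν' := by
    refine (integral_mono_measure hν (.of_forall fun _ => abs_nonneg _) hFsmul.abs).trans_eq ?_
    rw [integral_smul_measure, ENNReal.toReal_ofReal hK, smul_eq_mul]
  have hadd : ∫ y, (|F y| + F y) ∂ν' ≤ ∫ y, (|F y| + F y) ∂ν :=
    integral_mono_measure hν'
      (.of_forall fun y => neg_le_iff_add_nonneg'.1 (neg_le.1 (neg_le_abs (F y)))) (hFν.abs.add hFν)
  have hsub : ∫ y, (|F y| - F y) ∂ν' ≤ ∫ y, (|F y| - F y) ∂ν :=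
    integral_mono_measure hν' (.of_forall fun y => sub_nonneg.2 (le_abs_self _))
      (hFν.abs.sub hFν)
  rw [integral_add hF.abs hF, integral_add hFν.abs hFν] at hadd
  rw [integral_sub hF.abs hF, integral_sub hFν.abs hFν] at hsub
  rw [abs_le]
  constructor <;> linarith

lemma infDist_le_hausdorffDist_inter_closedBall {X : Type*} [PseudoMetricSpace X] {s t : Set X}
    {x y : X} {r : ℝ} (hy : y ∈ s ∩ closedBall x r) (ht : (t ∩ closedBall x r).Nonempty) :
    infDist y t ≤ hausdorffDist (s ∩ closedBall x r) (t ∩ closedBall x r) :=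
  (infDist_le_infDist_of_subset inter_subset_left ht).trans <|
    infDist_le_hausdorffDist_of_mem hy <|
      hausdorffEDist_ne_top_of_nonempty_of_bounded ⟨y, hy⟩ ht
        (isBounded_closedBall.subset inter_subset_right)
        (isBounded_closedBall.subset inter_subset_right)

section Flat

variable {E : Type*} [NormedAddCommGroup E] [InnerProductSpace ℝ E]

/-- `V` is `δ`-close to lying in `V'`: the sine of the largest angle between a vector of `V` and
the subspace `V'` is at most `δ`. -/
def HasTiltLE (V V' : Submodule ℝ E) [V'.HasOrthogonalProjection] (δ : ℝ) : Prop :=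
  ∀ v ∈ V, ‖v - V'.starProjection v‖ ≤ δ * ‖v‖

lemma HasTiltLE.mono {V V' : Submodule ℝ E} [V'.HasOrthogonalProjection] {δ δ' : ℝ}
    (h : HasTiltLE V V' δ) (hδ : δ ≤ δ') : HasTiltLE V V' δ' :=
  fun v hv => (h v hv).trans (mul_le_mul_of_nonneg_right hδ (norm_nonneg v))

lemma HasTiltLE.le_norm_starProjection {V V' : Submodule ℝ E} [V'.HasOrthogonalProjection] {δ : ℝ}
    (h : HasTiltLE V V' δ) {v : E} (hv : v ∈ V) : (1 - δ) * ‖v‖ ≤ ‖V'.starProjection v‖ := by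
  have := norm_sub_norm_le v (V'.starProjection v)
  linarith [h v hv]

lemma HasTiltLE.surjective_orthogonalProjectionOnto {V V' : Submodule ℝ E}
    [FiniteDimensional ℝ V] [FiniteDimensional ℝ V'] {δ : ℝ} (h : HasTiltLE V V' δ) (hδ : δ < 1)
    (hdim : Module.finrank ℝ V = Module.finrank ℝ V') :
    Function.Surjective (V'.orthogonalProjectionOnto.toLinearMap ∘ₗ V.subtype) := by
  refine (LinearMap.injective_iff_surjective_of_finrank_eq_finrank hdim).1
    ((injective_iff_map_eq_zero _).2 fun v hv => ?_)
  have hproj : V'.starProjection (v : E) = 0 := congrArg Subtype.val hv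
  have hle := h.le_norm_starProjection v.2
  rw [hproj, norm_zero] at hle
  have hnorm : ‖(v : E)‖ ≤ 0 := nonpos_of_mul_nonpos_right hle (sub_pos.2 hδ)
  exact Subtype.ext (norm_le_zero_iff.1 hnorm)

section Projection

open EuclideanGeometry

variable {W W' : AffineSubspace ℝ E} [Nonempty W'] [FiniteDimensional ℝ W'.direction]
  {p x y z : E} {R h δ : ℝ}

lemma orthogonalProjection_sub_orthogonalProjection (y z : E) :
    (orthogonalProjection W' y : E) - orthogonalProjection W' z =
      W'.direction.starProjection (y - z) := by
  have := (orthogonalProjection W').linearMap_vsub y z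
  rw [orthogonalProjection_linear] at this
  exact (congrArg Subtype.val this).symm

lemma lipschitzWith_orthogonalProjection :
    LipschitzWith 1 fun y => (orthogonalProjection W' y : E) :=
  .of_dist_le_mul fun y z => by
    rw [dist_eq_norm, dist_eq_norm, orthogonalProjection_sub_orthogonalProjection]
    exact W'.direction.lipschitzWith_starProjection.norm_le_mul (map_zero _) _

lemma hasTiltLE_direction (hp : p ∈ W) (hR : 0 < R)
    (hW : ∀ y ∈ W, dist y p ≤ R → infDist y W' ≤ h) :
    HasTiltLE W.direction W'.direction (2 * h / R) := by
  intro v hv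
  rcases eq_or_ne v 0 with rfl | hv₀
  · simp
  have hnorm : 0 < ‖v‖ := norm_pos_iff.2 hv₀
  set u : E := (R / ‖v‖) • v
  have hu : ‖u‖ = R := by
    rw [norm_smul, norm_div, norm_norm, Real.norm_of_nonneg hR.le, div_mul_cancel₀ _ hnorm.ne']
  have hy : u + p ∈ W := AffineSubspace.vadd_mem_of_mem_direction (W.direction.smul_mem _ hv) hp
  have hdisp : u - W'.direction.starProjection u =
      (u + p - orthogonalProjection W' (u + p)) - (p - orthogonalProjection W' p) := by
    have := orthogonalProjection_sub_orthogonalProjection (W' := W') (u + p) p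
    rw [add_sub_cancel_right] at this
    rw [← this]
    abel
  have hu_le : ‖u - W'.direction.starProjection u‖ ≤ 2 * h := by
    rw [hdisp, two_mul]
    refine (norm_sub_le _ _).trans (add_le_add ?_ ?_)
    · rw [← dist_eq_norm, dist_orthogonalProjection_eq_infDist]
      exact hW _ hy (by rw [dist_eq_norm, add_sub_cancel_right, hu])
    · rw [← dist_eq_norm, dist_orthogonalProjection_eq_infDist]
      exact hW _ hp (by rw [dist_self]; exact hR.le)
  rw [map_smul, ← smul_sub, norm_smul, norm_div, norm_norm, Real.norm_of_nonneg hR.le] at hu_le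
  rw [div_mul_eq_mul_div, le_div_iff₀ hR]
  rw [div_mul_eq_mul_div, div_le_iff₀ hnorm] at hu_le
  linarith

lemma HasTiltLE.dist_orthogonalProjection_le (hW : HasTiltLE W.direction W'.direction δ)
    (hp : p ∈ W) (hy : y ∈ W) :
    dist y (orthogonalProjection W' y) ≤ infDist p W' + δ * dist y p := by
  have hdisp : y - orthogonalProjection W' y =
      (p - orthogonalProjection W' p) + (y - p - W'.direction.starProjection (y - p)) := by
    rw [← orthogonalProjection_sub_orthogonalProjection]
    abel
  rw [← dist_orthogonalProjection_eq_infDist, dist_eq_norm, dist_eq_norm, dist_eq_norm, hdisp]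
  exact (norm_add_le _ _).trans
    (add_le_add_right (hW _ (AffineSubspace.vsub_mem_direction hy hp)) _)

lemma HasTiltLE.antilipschitzWith_domRestrict_orthogonalProjection
    (hW : HasTiltLE W.direction W'.direction δ) (hδ : δ < 1) :
    AntilipschitzWith (Real.toNNReal (1 - δ)⁻¹)
      ((W : Set E).domRestrict fun y => (orthogonalProjection W' y : E)) := by
  have hδ' : 0 < 1 - δ := sub_pos.2 hδ
  refine .of_le_mul_dist fun y z => ?_
  rw [Real.coe_toNNReal _ (inv_nonneg.2 hδ'.le), inv_mul_eq_div, le_div_iff₀' hδ',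
    domRestrict_apply, domRestrict_apply, Subtype.dist_eq, dist_eq_norm, dist_eq_norm,
    orthogonalProjection_sub_orthogonalProjection]
  exact hW.le_norm_starProjection (AffineSubspace.vsub_mem_direction y.2 z.2)

lemma HasTiltLE.surjOn_orthogonalProjection [FiniteDimensional ℝ W.direction]
    (hW : HasTiltLE W.direction W'.direction δ) (hδ : δ < 1) (hne : (W : Set E).Nonempty)
    (hdim : Module.finrank ℝ W.direction = Module.finrank ℝ W'.direction) :
    SurjOn (fun y => (orthogonalProjection W' y : E)) W W' := by
  intro w hw
  obtain ⟨p, hp⟩ := hne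
  obtain ⟨v, hv⟩ := hW.surjective_orthogonalProjectionOnto hδ hdim
    ⟨w - orthogonalProjection W' p, AffineSubspace.vsub_mem_direction hw
      (orthogonalProjection_mem p)⟩
  refine ⟨v + p, AffineSubspace.vadd_mem_of_mem_direction v.2 hp, ?_⟩
  have hdiff := orthogonalProjection_sub_orthogonalProjection (W' := W') (v + p) p
  rw [add_sub_cancel_right, show W'.direction.starProjection (v : E) = _ from
    congrArg Subtype.val hv] at hdiff
  exact sub_left_injective hdiff

lemma hasTiltLE_direction_of_hausdorffDist_le (hp : p ∈ W) (hpR : p ∈ closedBall x R)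
    (hR : 0 < R) (hne' : ((W' : Set E) ∩ closedBall x (2 * R)).Nonempty)
    (hdist : hausdorffDist ((W : Set E) ∩ closedBall x (2 * R)) (W' ∩ closedBall x (2 * R)) ≤ h) :
    HasTiltLE W.direction W'.direction (2 * h / R) := by
  refine hasTiltLE_direction hp hR fun y hy hyp =>
    (infDist_le_hausdorffDist_inter_closedBall ⟨hy, ?_⟩ hne').trans hdist
  rw [two_mul]
  exact (dist_triangle y p x).trans (add_le_add hyp hpR)

lemma dist_orthogonalProjection_le_of_hausdorffDist_le (hp : p ∈ W) (hpR : p ∈ closedBall x R)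
    (hR : 0 < R) (hne' : ((W' : Set E) ∩ closedBall x (2 * R)).Nonempty)
    (hdist : hausdorffDist ((W : Set E) ∩ closedBall x (2 * R)) (W' ∩ closedBall x (2 * R)) ≤ h)
    (hy : y ∈ W) : dist y (orthogonalProjection W' y) ≤ 3 * h + 2 * h / R * dist x y := by
  have hp2R : p ∈ closedBall x (2 * R) := closedBall_subset_closedBall (by linarith) hpR
  have hp' : infDist p W' ≤ h :=
    (infDist_le_hausdorffDist_inter_closedBall ⟨hp, hp2R⟩ hne').trans hdist
  have hh : 0 ≤ h := infDist_nonneg.trans hp'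
  have htilt := hasTiltLE_direction_of_hausdorffDist_le hp hpR hR hne' hdist
  calc dist y (orthogonalProjection W' y)
      ≤ infDist p W' + 2 * h / R * dist y p := htilt.dist_orthogonalProjection_le hp hy
    _ ≤ h + 2 * h / R * (dist x y + R) := by
      gcongr
      rw [dist_comm x y]
      exact (dist_triangle_right y p x).trans (add_le_add_right hpR _)
    _ = 3 * h + 2 * h / R * dist x y := by field_simp; ring

variable [MeasurableSpace E] [BorelSpace E] {n : ℕ} {F : E → ℝ}

lemma HasTiltLE.map_orthogonalProjection_le (hW : HasTiltLE W.direction W'.direction δ)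
    (hδ : δ < 1) (n : ℕ) :
    ((μH[(n : ℝ)] : Measure E).restrict W).map (fun y => (orthogonalProjection W' y : E)) ≤
      ENNReal.ofReal (((1 - δ)⁻¹) ^ n) • (μH[(n : ℝ)] : Measure E).restrict W' := by
  have h := map_restrict_hausdorffMeasure_le_of_antilipschitz
    lipschitzWith_orthogonalProjection.continuous.measurable n.cast_nonneg
    (hW.antilipschitzWith_domRestrict_orthogonalProjection hδ)
    (fun y _ => orthogonalProjection_mem (s := W') y)
  rwa [ENNReal.rpow_natCast, ← ENNReal.ofReal, ← ENNReal.ofReal_pow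
    (inv_nonneg.2 (sub_nonneg.2 hδ.le))] at h

lemma HasTiltLE.integrable_comp_orthogonalProjection (hW : HasTiltLE W.direction W'.direction δ)
    (hδ : δ < 1) (hF : IntegrableOn F W' μH[(n : ℝ)]) :
    IntegrableOn (fun y => F (orthogonalProjection W' y)) W μH[(n : ℝ)] :=
  ((hF.smul_measure ENNReal.ofReal_ne_top).mono_measure
    (hW.map_orthogonalProjection_le hδ n)).comp_measurable
      lipschitzWith_orthogonalProjection.continuous.measurable

lemma HasTiltLE.abs_setIntegral_comp_sub_le [FiniteDimensional ℝ W.direction]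
    (hW : HasTiltLE W.direction W'.direction δ) (hδ : δ < 1) (hne : (W : Set E).Nonempty)
    (hdim : Module.finrank ℝ W.direction = Module.finrank ℝ W'.direction)
    (hF : IntegrableOn F W' μH[(n : ℝ)]) :
    |∫ y in (W : Set E), F (orthogonalProjection W' y) ∂μH[(n : ℝ)]
        - ∫ y in (W' : Set E), F y ∂μH[(n : ℝ)]| ≤
      (((1 - δ)⁻¹) ^ n - 1) * ∫ y in (W' : Set E), |F y| ∂μH[(n : ℝ)] := by
  have hle := hW.map_orthogonalProjection_le hδ n
  have hmeas : AEStronglyMeasurable F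
      (((μH[(n : ℝ)] : Measure E).restrict W).map fun y => (orthogonalProjection W' y : E)) :=
    ((hF.smul_measure ENNReal.ofReal_ne_top).mono_measure hle).aestronglyMeasurable
  rw [← integral_map lipschitzWith_orthogonalProjection.continuous.aemeasurable hmeas]
  exact abs_integral_sub_le_of_le_smul (pow_nonneg (inv_nonneg.2 (sub_nonneg.2 hδ.le)) n)
    (restrict_hausdorffMeasure_le_map_of_surjOn lipschitzWith_orthogonalProjection n.cast_nonneg
      (hW.surjOn_orthogonalProjection hδ hne hdim)) hle hF

end Projection

/-- `L` is an affine subspace of dimension `n`. In finite dimension this is the notion of an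
`n`-plane; finite-dimensionality is required separately because `finrank` is `0` on
infinite-dimensional spaces. -/
def IsFlatOfDim (n : ℕ) (L : Set E) : Prop :=
  ∃ W : AffineSubspace ℝ E, (W : Set E) = L ∧ FiniteDimensional ℝ W.direction ∧
    Module.finrank ℝ W.direction = n

/-- The upper regularity constant of `ℋⁿ` on `n`-planes. The factor `2ⁿ` accounts for recentring
balls at a point of the plane. -/
def flatGrowthConst (n : ℕ) : ℝ≥0 :=
  2 ^ n * ((μH[(n : ℝ)] : Measure (EuclideanSpace ℝ (Fin n))) (ball 0 1)).toNNReal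

instance isAddHaarMeasure_hausdorffMeasure_euclideanSpace (n : ℕ) :
    (μH[(n : ℝ)] : Measure (EuclideanSpace ℝ (Fin n))).IsAddHaarMeasure := by
  simpa only [finrank_euclideanSpace_fin] using
    isAddHaarMeasure_hausdorffMeasure (E := EuclideanSpace ℝ (Fin n))

lemma hausdorffMeasure_closedBall_two_mul (n : ℕ) {r : ℝ} (hr : 0 ≤ r) :
    (μH[(n : ℝ)] : Measure (EuclideanSpace ℝ (Fin n))) (closedBall 0 (2 * r)) =
      ENNReal.ofReal (flatGrowthConst n * r ^ n) := by
  rw [Measure.addHaar_closedBall _ _ (by positivity), finrank_euclideanSpace_fin, flatGrowthConst,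
    NNReal.coe_mul, mul_right_comm, ENNReal.ofReal_mul (by positivity), ENNReal.ofReal_coe_nnreal,
    ENNReal.coe_toNNReal measure_ball_lt_top.ne, mul_pow]
  rfl

variable {n : ℕ} {L L' : Set E} {x : E}

lemma IsFlatOfDim.isClosed (hL : IsFlatOfDim n L) : IsClosed L := by
  obtain ⟨W, rfl, _, -⟩ := hL
  exact W.closed_of_finiteDimensional

variable [MeasurableSpace E] [BorelSpace E]

lemma IsFlatOfDim.hasUpperGrowthAt (hL : IsFlatOfDim n L) (x : E) :
    HasUpperGrowthAt n (flatGrowthConst n) x ((μH[(n : ℝ)] : Measure E).restrict L) := by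
  obtain ⟨W, rfl, _, rfl⟩ := hL
  set n := Module.finrank ℝ W.direction
  intro r hr
  rw [Measure.restrict_apply measurableSet_closedBall]
  rcases (closedBall x r ∩ (W : Set E)).eq_empty_or_nonempty with hempty | ⟨z, hz, hzW⟩
  · rw [hempty, measure_empty]
    exact zero_le
  let b := stdOrthonormalBasis ℝ W.direction
  let chart : EuclideanSpace ℝ (Fin n) → E := fun u => z + (b.repr.symm u : E)
  have hchart : LipschitzWith 1 chart := .of_dist_le_mul fun u v => by
    rw [dist_add_left, ← Subtype.dist_eq, LinearIsometryEquiv.dist_map, NNReal.coe_one, one_mul]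
  have hcover : closedBall x r ∩ (W : Set E) ⊆ chart '' closedBall 0 (2 * r) := by
    rintro y ⟨hy, hyW⟩
    refine ⟨b.repr ⟨y - z, AffineSubspace.vsub_mem_direction hyW hzW⟩, ?_, by simp [chart]⟩
    rw [mem_closedBall_zero_iff, LinearIsometryEquiv.norm_map, Submodule.coe_norm,
      ← dist_eq_norm, two_mul]
    exact (dist_triangle_right y z x).trans (add_le_add hy hz)
  calc μH[(n : ℝ)] (closedBall x r ∩ (W : Set E))
      ≤ μH[(n : ℝ)] (chart '' closedBall 0 (2 * r)) := measure_mono hcover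
    _ ≤ μH[(n : ℝ)] (closedBall (0 : EuclideanSpace ℝ (Fin n)) (2 * r)) := by
        simpa using hchart.hausdorffMeasure_image_le n.cast_nonneg (closedBall 0 (2 * r))
    _ = ENNReal.ofReal (flatGrowthConst n * r ^ n) := hausdorffMeasure_closedBall_two_mul n hr.le

lemma inv_one_sub_pow_sub_one_le {δ : ℝ} (hδ₀ : 0 ≤ δ) (hδ : δ < 1) {n : ℕ}
    (hn : 2 * n * δ ≤ 1) : ((1 - δ)⁻¹) ^ n - 1 ≤ 2 * n * δ := by
  have hbernoulli : 1 - n * δ ≤ (1 - δ) ^ n := by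
    have := one_add_mul_le_pow (a := -δ) (by linarith) n
    rwa [mul_neg, ← sub_eq_add_neg, ← sub_eq_add_neg] at this
  have hpos : 0 < 1 - n * δ := by linarith
  have hnδ : 0 ≤ n * δ := by positivity
  rw [inv_pow, sub_le_iff_le_add]
  calc ((1 - δ) ^ n)⁻¹ ≤ (1 - n * δ)⁻¹ := by gcongr
    _ ≤ 2 * n * δ + 1 := by
      rw [inv_le_iff_one_le_mul₀ hpos]
      nlinarith [mul_nonneg hnδ (sub_nonneg.2 hn)]

lemma IsCZKernelAt.abs_sub_le_tailWeight {X : Type*} [PseudoMetricSpace X] {s A r ε : ℝ}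
    {x y y' : X} {F : X → ℝ} (hF : IsCZKernelAt s A x F) (hr : 0 < r)
    (hF₀ : ∀ y, dist x y ≤ r → F y = 0) (hε : 16 * ε ≤ 1)
    (hyy' : dist y y' ≤ ε * (2 * dist x y + 3 * r)) :
    |F y - F y'| ≤ 8 * ε * A * tailWeight s x (r / 2) y := by
  have hε₀ : 0 ≤ ε := nonneg_of_mul_nonneg_left (dist_nonneg.trans hyy') (by positivity)
  have hA := hF.const_nonneg
  rcases le_or_gt (r / 2) (dist x y) with hfar | hclose
  · have hxy : 0 < dist x y := (half_pos hr).trans_le hfar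
    have hdisp : dist y y' ≤ 8 * ε * dist x y := by
      nlinarith [mul_le_mul_of_nonneg_left hfar hε₀]
    have hhalf : dist y y' ≤ dist x y / 2 := by
      nlinarith [mul_le_mul_of_nonneg_right hε hxy.le]
    calc |F y - F y'| ≤ A * dist y y' / dist x y ^ (s + 1) := hF.abs_sub_le y y' hxy hhalf
      _ ≤ A * (8 * ε * dist x y) / dist x y ^ (s + 1) := by gcongr
      _ = 8 * ε * A * tailWeight s x (r / 2) y := by
        rw [tailWeight_of_le hfar, Real.rpow_add_one hxy.ne']
        field_simp
  · have hy' : dist x y' ≤ r := by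
      have := dist_triangle x y y'
      nlinarith [mul_le_mul_of_nonneg_right hε hr.le, mul_le_mul_of_nonneg_left hclose.le hε₀]
    rw [hF₀ y (by linarith), hF₀ y' hy', sub_self, abs_zero]
    exact mul_nonneg (by positivity) tailWeight_nonneg

lemma IsCZKernelAt.abs_integral_sub_comp_le {X : Type*} [PseudoMetricSpace X] [MeasurableSpace X]
    [OpensMeasurableSpace X] {A β r ε : ℝ} {D : ℝ≥0} {x : X} {ν : Measure X} {F : X → ℝ}
    {P : X → X} (hF : IsCZKernelAt (n + β) A x F) (hν : HasUpperGrowthAt n D x ν) (hβ : 0 < β)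
    (hr : 0 < r) (hF₀ : ∀ y, dist x y ≤ r → F y = 0) (hε₀ : 0 ≤ ε) (hε : 16 * ε ≤ 1)
    (hFP : Integrable (fun y => F (P y)) ν)
    (hP : ∀ᵐ y ∂ν, dist y (P y) ≤ ε * (2 * dist x y + 3 * r)) :
    |∫ y, F y ∂ν - ∫ y, F (P y) ∂ν| ≤
      8 * 2 ^ β * ε * (A * (tailConst n β * D * r ^ (-β))) := by
  have hA := hF.const_nonneg
  rw [← integral_sub (hF.integrable hν hβ hr hF₀) hFP]
  calc |∫ y, (F y - F (P y)) ∂ν| ≤ ∫ y, |F y - F (P y)| ∂ν := abs_integral_le_integral_abs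
    _ ≤ 8 * ε * A * (tailConst n β * D * (r / 2) ^ (-β)) :=
      hν.integral_abs_le hβ (half_pos hr) (by positivity)
        (hP.mono fun y hy => hF.abs_sub_le_tailWeight hr hF₀ hε hy)
    _ = 8 * 2 ^ β * ε * (A * (tailConst n β * D * r ^ (-β))) := by
      rw [Real.div_rpow hr.le zero_le_two, Real.rpow_neg zero_le_two, div_inv_eq_mul]
      ring

/-- The constant in the comparison of a truncated potential over two nearby `n`-planes; see
`IsCZKernelAt.abs_setIntegral_sub_le`. -/
def flatComparisonConst (n : ℕ) (β : ℝ) : ℝ :=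
  (32 * (n + 1) + 8 * 2 ^ β) * (tailConst n β * flatGrowthConst n)

lemma flatComparisonConst_nonneg (n : ℕ) {β : ℝ} (hβ : 0 < β) : 0 ≤ flatComparisonConst n β := by
  have := tailConst_pos n hβ
  rw [flatComparisonConst]
  positivity

namespace IsCZKernelAt

variable {A β r R ε : ℝ} {F : E → ℝ}

lemma abs_setIntegral_sub_le_of_mul_le_one (hF : IsCZKernelAt (n + β) A x F)
    (hβ : 0 < β) (hr : 0 < r) (hrR : r ≤ R) (hF₀ : ∀ y, dist x y ≤ r → F y = 0)
    (hL : IsFlatOfDim n L) (hL' : IsFlatOfDim n L') (hne : (L ∩ closedBall x R).Nonempty)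
    (hne' : (L' ∩ closedBall x (2 * R)).Nonempty)
    (hdist : hausdorffDist (L ∩ closedBall x (2 * R)) (L' ∩ closedBall x (2 * R)) ≤ ε * r)
    (hε₀ : 0 ≤ ε) (hε : 16 * (n + 1) * ε ≤ 1) :
    |∫ y in L, F y ∂μH[(n : ℝ)] - ∫ y in L', F y ∂μH[(n : ℝ)]| ≤
      flatComparisonConst n β * ε * A * r ^ (-β) := by
  obtain ⟨W, rfl, _, hn⟩ := hL
  obtain ⟨W', rfl, _, hn'⟩ := hL'
  have : Nonempty W' := hne'.left.to_subtype
  obtain ⟨p, hp, hpR⟩ := id hne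
  have hR : 0 < R := hr.trans_le hrR
  let P : E → E := fun y => EuclideanGeometry.orthogonalProjection W' y
  have hslope : 2 * (ε * r) / R ≤ 2 * ε := by
    rw [div_le_iff₀ hR, ← mul_assoc]
    gcongr
  have hnε : 0 ≤ n * ε := by positivity
  have htilt : HasTiltLE W.direction W'.direction (2 * ε) :=
    (hasTiltLE_direction_of_hausdorffDist_le hp hpR hR hne' hdist).mono hslope
  have hdisp : ∀ y ∈ W, dist y (P y) ≤ ε * (2 * dist x y + 3 * r) := fun y hy => by
    have hPy := dist_orthogonalProjection_le_of_hausdorffDist_le hp hpR hR hne' hdist hy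
    linarith [mul_le_mul_of_nonneg_right hslope (dist_nonneg (x := x) (y := y))]
  have hgrowth := IsFlatOfDim.hasUpperGrowthAt ⟨W, rfl, ‹_›, hn⟩ x
  have hgrowth' := IsFlatOfDim.hasUpperGrowthAt ⟨W', rfl, ‹_›, hn'⟩ x
  have hint' := hF.integrable hgrowth' hβ hr hF₀
  have hmove : |∫ y in W, F y ∂μH[(n : ℝ)] - ∫ y in W, F (P y) ∂μH[(n : ℝ)]| ≤
      8 * 2 ^ β * ε * (A * (tailConst n β * flatGrowthConst n * r ^ (-β))) :=
    hF.abs_integral_sub_comp_le hgrowth hβ hr hF₀ hε₀ (by linarith)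
      (htilt.integrable_comp_orthogonalProjection (by linarith) hint')
      ((ae_restrict_mem W.closed_of_finiteDimensional.measurableSet).mono hdisp)
  have hproj : |∫ y in W, F (P y) ∂μH[(n : ℝ)] - ∫ y in W', F y ∂μH[(n : ℝ)]| ≤
      4 * n * ε * (A * (tailConst n β * flatGrowthConst n * r ^ (-β))) := by
    refine (htilt.abs_setIntegral_comp_sub_le (by linarith) ⟨p, hp⟩ (hn.trans hn'.symm)
      hint').trans (mul_le_mul ?_ (hF.integral_abs_le hgrowth' hβ hr hF₀) ?_ (by positivity))
    · linarith [inv_one_sub_pow_sub_one_le (δ := 2 * ε) (n := n) (by positivity) (by linarith)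
        (by linarith)]
    · exact integral_nonneg fun _ => abs_nonneg _
  set Q := A * (tailConst n β * flatGrowthConst n * r ^ (-β))
  have hQ : 0 ≤ Q := (integral_nonneg fun _ => abs_nonneg _).trans
    (hF.integral_abs_le hgrowth hβ hr hF₀)
  have hεQ : 0 ≤ ε * Q := mul_nonneg hε₀ hQ
  have hnεQ : 0 ≤ n * ε * Q := mul_nonneg hnε hQ
  calc |∫ y in W, F y ∂μH[(n : ℝ)] - ∫ y in W', F y ∂μH[(n : ℝ)]|
      ≤ 8 * 2 ^ β * ε * Q + 4 * n * ε * Q :=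
        (_root_.abs_sub_le _ _ _).trans (add_le_add hmove hproj)
    _ ≤ (32 * (n + 1) + 8 * 2 ^ β) * ε * Q := by linarith
    _ = flatComparisonConst n β * ε * A * r ^ (-β) := by
      simp only [Q, flatComparisonConst]
      ring

lemma abs_setIntegral_sub_le (hF : IsCZKernelAt (n + β) A x F)
    (hβ : 0 < β) (hr : 0 < r) (hrR : r ≤ R) (hF₀ : ∀ y, dist x y ≤ r → F y = 0)
    (hL : IsFlatOfDim n L) (hL' : IsFlatOfDim n L') (hne : (L ∩ closedBall x R).Nonempty)
    (hne' : (L' ∩ closedBall x (2 * R)).Nonempty)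
    (hdist : hausdorffDist (L ∩ closedBall x (2 * R)) (L' ∩ closedBall x (2 * R)) ≤ ε * r) :
    |∫ y in L, F y ∂μH[(n : ℝ)] - ∫ y in L', F y ∂μH[(n : ℝ)]| ≤
      flatComparisonConst n β * ε * A * r ^ (-β) := by
  have hε₀ : 0 ≤ ε := nonneg_of_mul_nonneg_left (hausdorffDist_nonneg.trans hdist) hr
  rcases le_or_gt (16 * (n + 1) * ε) 1 with hε | hε
  · exact hF.abs_setIntegral_sub_le_of_mul_le_one hβ hr hrR hF₀ hL hL' hne hne' hdist hε₀ hε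
  have hA := hF.const_nonneg
  have hC := tailConst_pos n hβ
  have hsize := hF.abs_integral_le (hL.hasUpperGrowthAt x) hβ hr hF₀
  have hsize' := hF.abs_integral_le (hL'.hasUpperGrowthAt x) hβ hr hF₀
  set Q := A * (tailConst n β * flatGrowthConst n * r ^ (-β))
  have hQ : 0 ≤ Q := by positivity
  calc |∫ y in L, F y ∂μH[(n : ℝ)] - ∫ y in L', F y ∂μH[(n : ℝ)]|
      ≤ Q + Q := (abs_sub _ _).trans (add_le_add hsize hsize')
    _ ≤ (32 * (n + 1) + 8 * 2 ^ β) * ε * Q := by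
      have : 0 ≤ 2 ^ β * ε * Q := by positivity
      nlinarith [mul_le_mul_of_nonneg_right hε.le hQ]
    _ = flatComparisonConst n β * ε * A * r ^ (-β) := by
      simp only [Q, flatComparisonConst]
      ring

end IsCZKernelAt

end Flat

lemma hasSum_pow_mul_add_succ {𝕜 : Type*} [Field 𝕜] [TopologicalSpace 𝕜] [IsTopologicalRing 𝕜]
    [T2Space 𝕜] {q : 𝕜} {a : ℕ → 𝕜} (hq : q ≠ 0) (ha : Summable fun k => q ^ k * a k) :
    HasSum (fun k => q ^ k * (a k + a (k + 1)))
      (∑' k, q ^ k * a k + q⁻¹ * (∑' k, q ^ k * a k - a 0)) := by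
  have hsucc : HasSum (fun k => q ^ (k + 1) * a (k + 1)) (∑' k, q ^ k * a k - a 0) := by
    simpa using (hasSum_nat_add_iff' 1).2 ha.hasSum
  have hadd := ha.hasSum.add (hsucc.mul_left q⁻¹)
  convert hadd using 2 with k
  rw [pow_succ]
  field_simp

section Multiscale

variable {E : Type*} [NormedAddCommGroup E] [InnerProductSpace ℝ E] [MeasurableSpace E]
  [BorelSpace E]

/-- The measure `μ` is approximated at `x`, at the scales `2ᵏℓ`, by multiples `c k ≤ C₀` of
Hausdorff measure on the `n`-planes `L k`, with errors `α k`. The last three fields are the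
conditions (i)-(iii) of the multiscale hypotheses. -/
structure IsMultiscaleApprox (n : ℕ) (C₀ : ℝ) (μ : Measure E) (x : E) (ℓ : ℝ)
    (L : ℕ → Set E) (c α : ℕ → ℝ) : Prop where
  isFlat : ∀ k, IsFlatOfDim n (L k)
  inter_nonempty : ∀ k, (L k ∩ closedBall x (2 ^ k * ℓ)).Nonempty
  coeff_nonneg : ∀ k, 0 ≤ c k
  coeff_le : ∀ k, c k ≤ C₀
  err_nonneg : ∀ k, 0 ≤ α k
  abs_integral_sub_le : ∀ k, ∀ f : E → ℝ, LipschitzWith 1 f →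
    tsupport f ⊆ closedBall x (2 ^ (k + 1) * ℓ) →
    |(∫ y, f y ∂μ) - c k * ∫ y in L k, f y ∂(μH[(n : ℝ)])| ≤ α k * (2 ^ k * ℓ) ^ (n + 1)
  abs_coeff_sub_le : ∀ k, |c (k + 1) - c k| ≤ α (k + 1)
  hausdorffDist_le : ∀ k, hausdorffDist (L k ∩ closedBall x (2 ^ (k + 1) * ℓ))
    (L (k + 1) ∩ closedBall x (2 ^ (k + 1) * ℓ)) ≤ α (k + 1) * 2 ^ (k + 1) * ℓ

/-- The difference between the truncated potentials at `x` of `μ` and of `c ℋⁿ` on `L`. -/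
def truncationDefect (n : ℕ) (μ : Measure E) (x : E) (K : E → ℝ) (L : Set E) (c r : ℝ) : ℝ :=
  (∫ y, truncatedKernel x r K y ∂μ) - c * ∫ y in L, truncatedKernel x r K y ∂μH[(n : ℝ)]

/-- The constant in the comparison of the defects at consecutive scales; see
`IsMultiscaleApprox.abs_truncationDefect_sub_le`. -/
def stepConst (n : ℕ) (β A C₀ κ : ℝ) : ℝ :=
  5 * A * (8 / κ ^ (n + 1) + C₀ * flatComparisonConst n β / κ + tailConst n β * flatGrowthConst n)

variable {n : ℕ} {β A C₀ κ ℓ : ℝ} {D : ℝ≥0} {μ : Measure E} {x : E} {K : E → ℝ}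
  {L : ℕ → Set E} {c α : ℕ → ℝ}

lemma stepConst_nonneg (n : ℕ) (hβ : 0 < β) (hA : 0 ≤ A) (hC₀ : 0 ≤ C₀) (hκ : 0 ≤ κ) :
    0 ≤ stepConst n β A C₀ κ := by
  have := (tailConst_pos n hβ).le
  have := flatComparisonConst_nonneg n hβ
  rw [stepConst]
  positivity

lemma truncationDefect_sub_truncationDefect {M M' : Set E} {a a' r : ℝ}
    (hK : IsCZKernelAt (n + β) A x K) (hβ : 0 < β) (hμ : HasUpperGrowthAt n D x μ)
    (hM : IsFlatOfDim n M) (hr : 0 < r) :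
    truncationDefect n μ x K M a r - truncationDefect n μ x K M' a' (2 * r) =
      (∫ y, (truncatedKernel x r K y - truncatedKernel x (2 * r) K y) ∂μ)
        - a * (∫ y in M, (truncatedKernel x r K y - truncatedKernel x (2 * r) K y) ∂μH[(n : ℝ)])
        - a * ((∫ y in M, truncatedKernel x (2 * r) K y ∂μH[(n : ℝ)])
          - ∫ y in M', truncatedKernel x (2 * r) K y ∂μH[(n : ℝ)])
        + (a' - a) * ∫ y in M', truncatedKernel x (2 * r) K y ∂μH[(n : ℝ)] := by
  have hint {ρ : ℝ} {ν : Measure E} {D : ℝ≥0} (hρ : 0 < ρ) (hν : HasUpperGrowthAt n D x ν) :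
      Integrable (truncatedKernel x ρ K) ν :=
    (hK.truncatedKernel hρ).integrable hν hβ hρ fun _ => truncatedKernel_eq_zero hρ
  have h2r : 0 < 2 * r := by positivity
  rw [truncationDefect, truncationDefect, integral_sub (hint hr hμ) (hint h2r hμ),
    integral_sub (hint hr (hM.hasUpperGrowthAt x)) (hint h2r (hM.hasUpperGrowthAt x))]
  ring

namespace IsMultiscaleApprox

lemma bound_nonneg (h : IsMultiscaleApprox n C₀ μ x ℓ L c α) : 0 ≤ C₀ :=
  (h.coeff_nonneg 0).trans (h.coeff_le 0)

lemma abs_integral_sub_le_mul (h : IsMultiscaleApprox n C₀ μ x ℓ L c α) (k : ℕ) {M : ℝ}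
    (hM : 0 < M) {f : E → ℝ} (hf : ∀ y y', |f y - f y'| ≤ M * dist y y')
    (hsupp : tsupport f ⊆ closedBall x (2 ^ (k + 1) * ℓ)) :
    |(∫ y, f y ∂μ) - c k * ∫ y in L k, f y ∂(μH[(n : ℝ)])| ≤
      M * (α k * (2 ^ k * ℓ) ^ (n + 1)) := by
  have hlip : LipschitzWith 1 fun y => M⁻¹ * f y := .of_dist_le_mul fun y y' => by
    rw [Real.dist_eq, ← mul_sub, abs_mul, abs_of_pos (inv_pos.2 hM), NNReal.coe_one, one_mul,
      inv_mul_le_iff₀ hM]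
    exact hf y y'
  have htest := h.abs_integral_sub_le k _ hlip ((tsupport_mul_subset_right).trans hsupp)
  rwa [integral_const_mul, integral_const_mul, mul_left_comm (c k), ← mul_sub, abs_mul,
    abs_of_pos (inv_pos.2 hM), inv_mul_le_iff₀ hM] at htest

lemma abs_integral_truncatedKernel_sub_le (h : IsMultiscaleApprox n C₀ μ x ℓ L c α)
    (hK : IsCZKernelAt (n + β) A x K) (hβ : 0 < β) (hA : 0 < A) (hκ : 0 < κ) (hκ' : κ ≤ 1 / 2)
    (hℓ : 0 < ℓ) (k : ℕ) {r : ℝ} (hr : r = 2 ^ k * (κ * ℓ)) :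
    |(∫ y, (truncatedKernel x r K y - truncatedKernel x (2 * r) K y) ∂μ) - c k *
        ∫ y in L k, (truncatedKernel x r K y - truncatedKernel x (2 * r) K y) ∂(μH[(n : ℝ)])| ≤
      40 * A / κ ^ (n + 1) * α k * r ^ (-β) := by
  have hr₀ : 0 < r := by rw [hr]; positivity
  have hsupp : closedBall x (4 * r) ⊆ closedBall x (2 ^ (k + 1) * ℓ) := by
    refine closedBall_subset_closedBall ?_
    rw [hr, pow_succ]
    have : 0 < 2 ^ k * ℓ := by positivity
    nlinarith
  refine (h.abs_integral_sub_le_mul k (by positivity)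
    (hK.abs_truncatedKernel_sub_truncatedKernel_sub_le hr₀ (by positivity))
    (tsupport_truncatedKernel_sub_subset hr₀ |>.trans hsupp)).trans_eq ?_
  have hscale : (2 : ℝ) ^ k * ℓ = r / κ := by rw [hr]; field_simp
  have hpow : r ^ ((n : ℝ) + β + 1) = r ^ (n + 1) * r ^ β := by
    rw [← Real.rpow_natCast, ← Real.rpow_add hr₀]
    push_cast
    ring_nf
  rw [hscale, hpow, Real.rpow_neg hr₀.le, div_pow]
  field_simp

lemma abs_setIntegral_truncatedKernel_sub_le (h : IsMultiscaleApprox n C₀ μ x ℓ L c α)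
    (hK : IsCZKernelAt (n + β) A x K) (hβ : 0 < β) (hκ : 0 < κ) (hκ' : κ ≤ 1 / 2) (hℓ : 0 < ℓ)
    (k : ℕ) {r : ℝ} (hr : r = 2 ^ (k + 1) * (κ * ℓ)) :
    |(∫ y in L k, truncatedKernel x r K y ∂μH[(n : ℝ)])
        - ∫ y in L (k + 1), truncatedKernel x r K y ∂μH[(n : ℝ)]| ≤
      flatComparisonConst n β / κ * (5 * A) * α (k + 1) * r ^ (-β) := by
  have hr₀ : 0 < r := by rw [hr]; positivity
  have hdouble : (2 : ℝ) ^ (k + 1) * ℓ = 2 * (2 ^ k * ℓ) := by ring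
  have hrR : r ≤ 2 ^ k * ℓ := by
    have : 0 < 2 ^ k * ℓ := by positivity
    rw [hr, pow_succ]
    nlinarith
  have hne := h.inter_nonempty (k + 1)
  have hdist := h.hausdorffDist_le k
  rw [mul_assoc] at hdist
  rw [hdouble] at hne hdist
  have hdist_r : α (k + 1) * (2 * (2 ^ k * ℓ)) = α (k + 1) / κ * r := by rw [hr]; field_simp; ring
  refine ((hK.truncatedKernel hr₀).abs_setIntegral_sub_le hβ hr₀ hrR
    (fun _ => truncatedKernel_eq_zero hr₀) (h.isFlat k) (h.isFlat (k + 1)) (h.inter_nonempty k) hne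
    (hdist.trans_eq hdist_r)).trans_eq ?_
  ring

lemma abs_truncationDefect_sub_le (h : IsMultiscaleApprox n C₀ μ x ℓ L c α)
    (hK : IsCZKernelAt (n + β) A x K) (hβ : 0 < β) (hA : 0 < A) (hμ : HasUpperGrowthAt n D x μ)
    (hκ : 0 < κ) (hκ' : κ ≤ 1 / 2) (hℓ : 0 < ℓ) (k : ℕ) {r : ℝ} (hr : r = 2 ^ k * (κ * ℓ)) :
    |truncationDefect n μ x K (L k) (c k) r
        - truncationDefect n μ x K (L (k + 1)) (c (k + 1)) (2 * r)| ≤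
      stepConst n β A C₀ κ * r ^ (-β) * (α k + α (k + 1)) := by
  have hr₀ : 0 < r := by rw [hr]; positivity
  have h2r : 0 < 2 * r := by positivity
  have hr' : 2 * r = 2 ^ (k + 1) * (κ * ℓ) := by rw [hr]; ring
  have hshrink : (2 * r) ^ (-β) ≤ r ^ (-β) :=
    Real.rpow_le_rpow_of_nonpos hr₀ (by linarith) (by linarith)
  have hC₀ := h.bound_nonneg
  have hα := h.err_nonneg k
  have hα' := h.err_nonneg (k + 1)
  have hT := (tailConst_pos n hβ).le
  have hG := flatComparisonConst_nonneg n hβ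
  have htest := h.abs_integral_truncatedKernel_sub_le hK hβ hA hκ hκ' hℓ k hr
  have hplanes := h.abs_setIntegral_truncatedKernel_sub_le hK hβ hκ hκ' hℓ k hr'
  have htail := (hK.truncatedKernel h2r).abs_integral_le
    ((h.isFlat (k + 1)).hasUpperGrowthAt x) hβ h2r fun _ => truncatedKernel_eq_zero h2r
  rw [truncationDefect_sub_truncationDefect hK hβ hμ (h.isFlat k) hr₀]
  refine ((abs_add_le _ _).trans (add_le_add_left (abs_sub _ _) _)).trans ?_
  rw [abs_mul, abs_mul, abs_of_nonneg (h.coeff_nonneg k)]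
  calc _ ≤ 40 * A / κ ^ (n + 1) * α k * r ^ (-β)
        + C₀ * (flatComparisonConst n β / κ * (5 * A) * α (k + 1) * r ^ (-β))
        + α (k + 1) * (5 * A * (tailConst n β * flatGrowthConst n * r ^ (-β))) := by
        gcongr
        · exact h.coeff_le k
        · exact hplanes.trans (by gcongr)
        · exact h.abs_coeff_sub_le k
        · exact htail.trans (by gcongr)
    _ ≤ 40 * A / κ ^ (n + 1) * (α k + α (k + 1)) * r ^ (-β)
        + C₀ * (flatComparisonConst n β / κ * (5 * A) * (α k + α (k + 1)) * r ^ (-β))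
        + (α k + α (k + 1)) * (5 * A * (tailConst n β * flatGrowthConst n * r ^ (-β))) := by
        gcongr <;> linarith
    _ = stepConst n β A C₀ κ * r ^ (-β) * (α k + α (k + 1)) := by
        rw [stepConst]
        ring

lemma tendsto_truncationDefect (h : IsMultiscaleApprox n C₀ μ x ℓ L c α)
    (hK : IsCZKernelAt (n + β) A x K) (hβ : 0 < β) (hμ : HasUpperGrowthAt n D x μ) {r : ℝ}
    (hr : 0 < r) :
    Filter.Tendsto (fun k => truncationDefect n μ x K (L k) (c k) (2 ^ k * r)) Filter.atTop
      (nhds 0) := by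
  have hbound : ∀ k, ‖truncationDefect n μ x K (L k) (c k) (2 ^ k * r)‖ ≤
      5 * A * (tailConst n β * (D + C₀ * flatGrowthConst n)) * r ^ (-β) * ((2 : ℝ) ^ (-β)) ^ k := by
    intro k
    have hk : 0 < 2 ^ k * r := by positivity
    have hF := hK.truncatedKernel hk
    have hF₀ : ∀ y, dist x y ≤ 2 ^ k * r → truncatedKernel x (2 ^ k * r) K y = 0 :=
      fun _ => truncatedKernel_eq_zero hk
    have htail := hF.abs_integral_le hμ hβ hk hF₀
    have htail' := hF.abs_integral_le ((h.isFlat k).hasUpperGrowthAt x) hβ hk hF₀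
    rw [two_pow_mul_rpow_neg k hr.le] at htail htail'
    refine (abs_sub _ _).trans ?_
    rw [abs_mul, abs_of_nonneg (h.coeff_nonneg k)]
    refine (add_le_add htail (mul_le_mul (h.coeff_le k) htail' (abs_nonneg _)
      h.bound_nonneg)).trans_eq ?_
    ring
  refine squeeze_zero_norm hbound ?_
  simpa only [mul_zero] using
    (tendsto_pow_atTop_nhds_zero_of_lt_one (by positivity) (two_rpow_neg_lt_one hβ)).const_mul
      (5 * A * (tailConst n β * (D + C₀ * flatGrowthConst n)) * r ^ (-β))

/-- The defects tend to `0` along the scales, so the defect at scale `κℓ` is at most the sum of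
its increments. -/
lemma abs_truncationDefect_le_tsum (h : IsMultiscaleApprox n C₀ μ x ℓ L c α)
    (hK : IsCZKernelAt (n + β) A x K) (hβ : 0 < β) (hA : 0 < A) (hμ : HasUpperGrowthAt n D x μ)
    (hκ : 0 < κ) (hκ' : κ ≤ 1 / 2) (hℓ : 0 < ℓ)
    (hsum : Summable fun k => ((2 : ℝ) ^ (-β)) ^ k * α k) :
    |truncationDefect n μ x K (L 0) (c 0) (κ * ℓ)| ≤
      stepConst n β A C₀ κ * (κ * ℓ) ^ (-β) * (1 + 2 ^ β) *
        ∑' k, ((2 : ℝ) ^ (-β)) ^ k * α k := by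
  have hstep : ∀ k, dist (truncationDefect n μ x K (L k) (c k) (2 ^ k * (κ * ℓ)))
      (truncationDefect n μ x K (L (k + 1)) (c (k + 1)) (2 ^ (k + 1) * (κ * ℓ))) ≤
      stepConst n β A C₀ κ * (κ * ℓ) ^ (-β) * (((2 : ℝ) ^ (-β)) ^ k * (α k + α (k + 1))) := by
    intro k
    rw [Real.dist_eq, pow_succ', mul_assoc 2]
    refine (h.abs_truncationDefect_sub_le hK hβ hA hμ hκ hκ' hℓ k rfl).trans_eq ?_
    rw [two_pow_mul_rpow_neg k (by positivity)]
    ring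
  have hadj := (hasSum_pow_mul_add_succ (q := (2 : ℝ) ^ (-β)) (by positivity) hsum).mul_left
    (stepConst n β A C₀ κ * (κ * ℓ) ^ (-β))
  have htotal := dist_le_tsum_of_dist_le_of_tendsto₀ _ hstep hadj.summable
    (h.tendsto_truncationDefect hK hβ hμ (by positivity))
  rw [hadj.tsum_eq, pow_zero, one_mul, Real.dist_0_eq_abs, Real.rpow_neg zero_le_two,
    inv_inv] at htotal
  rw [Real.rpow_neg zero_le_two, mul_assoc]
  refine htotal.trans ?_
  have hS := stepConst_nonneg n hβ hA.le h.bound_nonneg hκ.le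
  have hα := mul_nonneg (Real.rpow_nonneg zero_le_two β) (h.err_nonneg 0)
  gcongr
  linarith

end IsMultiscaleApprox

end Multiscale

section Potential

variable {E : Type*} [NormedAddCommGroup E] [InnerProductSpace ℝ E] [MeasurableSpace E]
  [BorelSpace E] {n : ℕ} {β A C₀ c₁ ℓ : ℝ} {D : ℝ≥0} {μ : Measure E} {x : E} {K : E → ℝ}
  {L : ℕ → Set E} {c α : ℕ → ℝ}

lemma setIntegral_truncatedKernel {X : Type*} [PseudoMetricSpace X] [MeasurableSpace X]
    {ν : Measure X} {x : X} {K : X → ℝ} {t : Set X} {r : ℝ} (ht : MeasurableSet t) (hr : 0 < r)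
    (h : 2 * r ≤ infDist x t) :
    ∫ y in t, truncatedKernel x r K y ∂ν = ∫ y in t, K y ∂ν :=
  setIntegral_congr_fun ht fun _ hy =>
    truncatedKernel_eq_self hr (h.trans (infDist_le_dist_of_mem hy))

lemma IsCZKernelAt.bddAbove_abs_setIntegral (hK : IsCZKernelAt (n + β) A x K) (hβ : 0 < β)
    {a : ℝ} (ha : 0 < a) (b : ℝ) :
    BddAbove {t : ℝ | ∃ M, IsFlatOfDim n M ∧ a ≤ infDist x M ∧ infDist x M ≤ b ∧
      t = |∫ y in M, K y ∂(μH[(n : ℝ)])|} := by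
  refine ⟨5 * A * (tailConst n β * flatGrowthConst n * (a / 2) ^ (-β)), ?_⟩
  rintro _ ⟨M, hM, hdist, -, rfl⟩
  rw [← setIntegral_truncatedKernel hM.isClosed.measurableSet (half_pos ha)
    (by rwa [mul_div_cancel₀ _ two_ne_zero])]
  exact (hK.truncatedKernel (half_pos ha)).abs_integral_le (hM.hasUpperGrowthAt x) hβ (half_pos ha)
    fun _ => truncatedKernel_eq_zero (half_pos ha)

lemma IsMultiscaleApprox.abs_integral_sub_mul_setIntegral_le
    (h : IsMultiscaleApprox n C₀ μ x ℓ L c α) (hK : IsCZKernelAt (n + β) A x K) (hβ : 0 < β)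
    (hA : 0 < A) (hμ : HasUpperGrowthAt n D x μ) {κ : ℝ} (hκ : 0 < κ) (hκ' : κ ≤ 1 / 2)
    (hℓ : 0 < ℓ) (hdist : ∀ᵐ y ∂μ, 2 * (κ * ℓ) ≤ dist x y) (hL : 2 * (κ * ℓ) ≤ infDist x (L 0))
    (hsum : Summable fun k => ((2 : ℝ) ^ (-β)) ^ k * α k) :
    |∫ y, K y ∂μ - c 0 * ∫ y in L 0, K y ∂μH[(n : ℝ)]| ≤
      stepConst n β A C₀ κ * κ ^ (-β) * (1 + 2 ^ β) *
        (ℓ ^ (-β) * ∑' k, ((2 : ℝ) ^ (-β)) ^ k * α k) := by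
  have hr : 0 < κ * ℓ := by positivity
  have hdefect := h.abs_truncationDefect_le_tsum hK hβ hA hμ hκ hκ' hℓ hsum
  have htrunc : ∫ y, truncatedKernel x (κ * ℓ) K y ∂μ = ∫ y, K y ∂μ :=
    integral_congr_ae (hdist.mono fun y hy => truncatedKernel_eq_self hr hy)
  rw [truncationDefect, htrunc,
    setIntegral_truncatedKernel (h.isFlat 0).isClosed.measurableSet hr hL,
    Real.mul_rpow hκ.le hℓ.le] at hdefect
  exact hdefect.trans_eq (by ring)

/-- The constant in `statement11_general`. -/
def potentialConst (n : ℕ) (β A C₀ c₁ : ℝ) : ℝ :=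
  stepConst n β A C₀ (c₁ / 2) * (c₁ / 2) ^ (-β) * (1 + 2 ^ β) + C₀

lemma potentialConst_pos (n : ℕ) (hβ : 0 < β) (hA : 0 ≤ A) (hC₀ : 0 < C₀) (hc₁ : 0 < c₁) :
    0 < potentialConst n β A C₀ c₁ := by
  have := stepConst_nonneg n hβ hA hC₀.le (half_pos hc₁).le
  rw [potentialConst]
  positivity

lemma two_rpow_neg_natCast_mul (k : ℕ) (β : ℝ) :
    (2 : ℝ) ^ (-(k : ℝ) * β) = ((2 : ℝ) ^ (-β)) ^ k := by
  rw [← Real.rpow_mul_natCast zero_le_two, neg_mul_comm, mul_comm]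

theorem statement11_general (hβ : 0 < β) (hA : 0 < A) (hc₁ : 0 < c₁) (hℓ : 0 < ℓ)
    (hμ : HasUpperGrowthAt n D x μ) (hdist : ∀ᵐ y ∂μ, ℓ ≤ dist x y)
    (hK : IsCZKernelAt (n + β) A x K) (h : IsMultiscaleApprox n C₀ μ x ℓ L c α)
    (hsum : Summable fun k : ℕ => (2 : ℝ) ^ (-(k : ℝ) * β) * α k)
    (hlow : c₁ * ℓ ≤ infDist x (L 0)) (hup : infDist x (L 0) ≤ c₁⁻¹ * ℓ) :
    |∫ y, K y ∂μ| ≤ potentialConst n β A C₀ c₁ *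
      (ℓ ^ (-β) * (∑' k : ℕ, (2 : ℝ) ^ (-(k : ℝ) * β) * α k)
        + sSup {t : ℝ | ∃ M, IsFlatOfDim n M ∧ c₁ * ℓ ≤ infDist x M ∧ infDist x M ≤ c₁⁻¹ * ℓ ∧
            t = |∫ y in M, K y ∂(μH[(n : ℝ)])|}) := by
  have hκ : 0 < c₁ / 2 := half_pos hc₁
  have hκℓ : 2 * (c₁ / 2 * ℓ) = c₁ * ℓ := by ring
  have hc₁_le : c₁ ≤ 1 := by
    by_contra! hc₁_gt
    exact absurd (le_of_mul_le_mul_right (hlow.trans hup) hℓ)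
      ((inv_lt_one_of_one_lt₀ hc₁_gt).trans hc₁_gt).not_ge
  have hplane := le_csSup (hK.bddAbove_abs_setIntegral hβ (mul_pos hc₁ hℓ) (c₁⁻¹ * ℓ))
    ⟨L 0, h.isFlat 0, hlow, hup, rfl⟩
  simp only [two_rpow_neg_natCast_mul] at hsum ⊢
  have hsub := h.abs_integral_sub_mul_setIntegral_le hK hβ hA hμ hκ (by linarith) hℓ
    (hdist.mono fun y hy => by nlinarith) (hκℓ.trans_le hlow) hsum
  set V := ℓ ^ (-β) * ∑' k, ((2 : ℝ) ^ (-β)) ^ k * α k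
  set a := stepConst n β A C₀ (c₁ / 2) * (c₁ / 2) ^ (-β) * (1 + 2 ^ β) with ha_def
  have hV : 0 ≤ V :=
    mul_nonneg (by positivity) (tsum_nonneg fun k => mul_nonneg (by positivity) (h.err_nonneg k))
  have ha : 0 ≤ a :=
    mul_nonneg (mul_nonneg (stepConst_nonneg n hβ hA.le h.bound_nonneg hκ.le) (by positivity))
      (by positivity)
  have hcoeff := mul_le_mul (h.coeff_le 0) hplane (abs_nonneg _) h.bound_nonneg
  rw [← abs_of_nonneg (h.coeff_nonneg 0), ← abs_mul] at hcoeff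
  rw [← sub_add_cancel (∫ y, K y ∂μ) (c 0 * ∫ y in L 0, K y ∂μH[(n : ℝ)]), potentialConst,
    ← ha_def, add_mul]
  refine (abs_add_le _ _).trans ((add_le_add hsub hcoeff).trans (add_le_add ?_ ?_))
  · exact mul_le_mul_of_nonneg_left (le_add_of_nonneg_right ((abs_nonneg _).trans hplane)) ha
  · exact mul_le_mul_of_nonneg_left (le_add_of_nonneg_left hV) h.bound_nonneg

end Potential

section Euclidean

variable {n d : ℕ}

lemma isNPlane_iff_isFlatOfDim {L : Set (Euc d)} : IsNPlane n L ↔ IsFlatOfDim n L :=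
  exists_congr fun _ => and_congr_right fun _ =>
    (and_iff_right <| inferInstanceAs <| FiniteDimensional ℝ _).symm

lemma msupport_eq_support (μ : Measure (Euc d)) : msupport μ = μ.support := by
  ext x
  rw [nhds_basis_ball.mem_measureSupport]
  rfl

lemma IsCZKernel.isCZKernelAt {β A : ℝ} {S : Euc d → Euc d → ℝ} (hS : IsCZKernel n β A S)
    (hA : 0 ≤ A) (x : Euc d) : IsCZKernelAt (n + β) A x (S x) where
  const_nonneg := hA
  abs_le y hxy := hS.1 x y (dist_pos.1 hxy)
  abs_sub_le y y' hxy := hS.2 x y y' (dist_pos.1 hxy)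

lemma IsADRWith.hasUpperGrowthAt {A : ℝ} {μ : Measure (Euc d)}
    (hμ : IsADRWith n A μ (msupport μ)) (x : Euc d) :
    HasUpperGrowthAt n (2 ^ n * A.toNNReal) x μ := by
  obtain ⟨hA, -, -, hball⟩ := hμ
  intro r hr
  rcases (closedBall x r ∩ msupport μ).eq_empty_or_nonempty with hempty | ⟨z, hz, hzμ⟩
  · rw [msupport_eq_support, ← disjoint_iff_inter_eq_empty] at hempty
    rw [measure_mono_null hempty.subset_compl_right Measure.measure_compl_support]
    exact zero_le
  · calc μ (closedBall x r) ≤ μ (closedBall z (2 * r)) :=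
          measure_mono <| closedBall_subset_closedBall' <| by
            rw [two_mul]
            gcongr
            rwa [dist_comm]
      _ ≤ ENNReal.ofReal (A * (2 * r) ^ n) := (hball z hzμ _ (by positivity)).2
      _ = ENNReal.ofReal ((2 ^ n * A.toNNReal : ℝ≥0) * r ^ n) := by
        push_cast
        rw [Real.coe_toNNReal A (by positivity), mul_pow]
        ring_nf

lemma infDist_msupport_pos {μ : Measure (Euc d)} {x : Euc d} (hμ : (msupport μ).Nonempty)
    (hx : x ∉ msupport μ) : 0 < infDist x (msupport μ) := by
  rw [msupport_eq_support] at hμ hx ⊢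
  exact (Measure.isClosed_support.notMem_iff_infDist_pos hμ).1 hx

lemma ae_infDist_msupport_le (μ : Measure (Euc d)) (x : Euc d) :
    ∀ᵐ y ∂μ, infDist x (msupport μ) ≤ dist x y := by
  rw [msupport_eq_support]
  exact Filter.mem_of_superset Measure.support_mem_ae fun y hy => infDist_le_dist_of_mem hy

lemma summable_two_rpow_mul_of_le_one {β : ℝ} (hβ : 0 < β) {α : ℕ → ℝ}
    (hα : ∀ k, 0 ≤ α k ∧ α k ≤ 1) :
    Summable fun k : ℕ => (2 : ℝ) ^ (-(k : ℝ) * β) * α k := by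
  simp only [two_rpow_neg_natCast_mul]
  exact (summable_geometric_of_lt_one (by positivity) (two_rpow_neg_lt_one hβ)).of_nonneg_of_le
    (fun k => mul_nonneg (by positivity) (hα k).1)
    fun k => mul_le_of_le_one_right (by positivity) (hα k).2

end Euclidean

/-- under the multiscale hypotheses (i)–(iii) and
`c₁ ℓ ≤ dist(x, L₀) ≤ c₁⁻¹ ℓ`, the potential `T_{S,μ}1(x)` is controlled by
`ℓ^{-β} Σ 2^{-kβ} α_k` plus the supremum of `|T_{S,L}1(x)|` over `n`-planes `L` with
`c₁ ℓ ≤ dist(x,L) ≤ c₁⁻¹ ℓ`. -/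
theorem statement11 (n d : ℕ) (hn : 0 < n) (hnd : n < d) (β A C₀ c₁ Aadr : ℝ)
    (hβ : 0 < β) (hA : 0 < A) (hC₀ : 0 < C₀) (hc₁ : 0 < c₁) :
    ∃ C : ℝ, 0 < C ∧
      ∀ μ : Measure (Euc d), IsADRWith n Aadr μ (msupport μ) →
      ∀ S : Euc d → Euc d → ℝ, IsCZKernel n β A S →
      ∀ x : Euc d, x ∉ msupport μ →
      ∀ ℓ : ℝ, ℓ = infDist x (msupport μ) →
      ∀ (L : ℕ → Set (Euc d)) (c α : ℕ → ℝ),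
        (∀ k, IsNPlane n (L k)) →
        (∀ k, (L k ∩ closedBall x ((2 : ℝ) ^ k * ℓ)).Nonempty) →
        (∀ k, 0 ≤ c k ∧ c k ≤ C₀) →
        (∀ k, 0 ≤ α k ∧ α k ≤ 1) →
        -- (i) d_{B(x, 2^{k+1}ℓ)}(μ, c_k ℋⁿ|_{L_k}) ≤ α_k (2^k ℓ)^{n+1}
        (∀ k, ∀ f : Euc d → ℝ, LipschitzWith 1 f →
          tsupport f ⊆ closedBall x ((2 : ℝ) ^ (k + 1) * ℓ) →
          |(∫ y, f y ∂μ) - c k * ∫ y in L k, f y ∂(μH[(n : ℝ)])|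
            ≤ α k * ((2 : ℝ) ^ k * ℓ) ^ (n + 1)) →
        -- (ii) |c_{k+1} - c_k| ≤ α_{k+1}
        (∀ k, |c (k + 1) - c k| ≤ α (k + 1)) →
        -- (iii) d_H(L_k ∩ B(x,2^{k+1}ℓ), L_{k+1} ∩ B(x,2^{k+1}ℓ)) ≤ α_{k+1} 2^{k+1} ℓ
        (∀ k, hausdorffDist (L k ∩ closedBall x ((2 : ℝ) ^ (k + 1) * ℓ))
            (L (k + 1) ∩ closedBall x ((2 : ℝ) ^ (k + 1) * ℓ))
            ≤ α (k + 1) * (2 : ℝ) ^ (k + 1) * ℓ) →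
        -- additionally c₁ ℓ ≤ dist(x, L₀) ≤ c₁⁻¹ ℓ
        c₁ * ℓ ≤ infDist x (L 0) → infDist x (L 0) ≤ c₁⁻¹ * ℓ →
        |∫ y, S x y ∂μ|
          ≤ C * (ℓ ^ (-β) * (∑' k : ℕ, (2 : ℝ) ^ (-(k : ℝ) * β) * α k)
              + sSup {t : ℝ | ∃ L' : Set (Euc d), IsNPlane n L' ∧
                  c₁ * ℓ ≤ infDist x L' ∧ infDist x L' ≤ c₁⁻¹ * ℓ ∧
                  t = |∫ y in L', S x y ∂(μH[(n : ℝ)])|}) := by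
  refine ⟨potentialConst n β A C₀ c₁, potentialConst_pos n hβ hA.le hC₀ hc₁, ?_⟩
  rintro μ hμ S hS x hx ℓ rfl L c α hL hne hc hα htest hcoeff hplane hlow hup
  have hsupp : (msupport μ).Nonempty :=
    nonempty_iff_ne_empty.2 fun hempty => hμ.2.2.1 (hempty ▸ Bornology.isBounded_empty)
  simp only [isNPlane_iff_isFlatOfDim] at hL ⊢
  exact statement11_general hβ hA hc₁ (infDist_msupport_pos hsupp hx) (hμ.hasUpperGrowthAt x)
    (ae_infDist_msupport_le μ x) (hS.isCZKernelAt hA.le x)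
    ⟨hL, hne, fun k => (hc k).1, fun k => (hc k).2, fun k => (hα k).1, htest, hcoeff, hplane⟩
    (summable_two_rpow_mul_of_le_one hβ hα) hlow hup
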